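/- Let (F_0, a) be initial data for the completion problem in ℂ^d with k < d (so d − rank(S_0) ≤ k < d), let λ = λ↑(S_0), and let λ′ = (λ_1,…,λ_k) ∈ ℝ^k. For strictly convex f : [0,∞) → [0,∞), let μ_f ∈ Γ_d(a) be the unique minimizer of γ ↦ Σ_{i=1}^d f(λ_i + γ_i) over Γ_d(a) and set ν_f(λ,a) = λ + μ_f; similarly let μ′_f ∈ Γ_k(a) be the unique minimizer of γ ↦ Σ_{i=1}^k f(λ′_i + γ_i) over Γ_k(a) and set ν_f(λ′,a) = λ′ + μ′_f. Then ν_f(λ,a) = (ν_f(λ′,a), λ_{k+1},…,λ_d). Moreover ν_f(λ,a) is the same vector for every strictly convex f, and its decreasing rearrangement is a minimum for majorization in Λ(C_a(F_0)) = {λ(S_F) : F ∈ C_a(F_0)}. -/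

import Mathlib

open Finset
open scoped ComplexOrder

noncomputable def sortAsc {m : ℕ} (x : Fin m → ℝ) : Fin m → ℝ :=
  x ∘ Tuple.sort x

noncomputable def sortDesc {m : ℕ} (x : Fin m → ℝ) : Fin m → ℝ :=
  fun i => (x ∘ Tuple.sort x) i.rev

noncomputable def pad {k : ℕ} (x : Fin k → ℝ) (m : ℕ) : Fin m → ℝ :=
  fun i => if h : (i : ℕ) < k then x ⟨i, h⟩ else 0

/-- `MajorizedBy x y` means `x ≺ y`. -/
def MajorizedBy {m : ℕ} (x y : Fin m → ℝ) : Prop :=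
  (∀ j : Fin m, ∑ i ∈ Finset.Iic j, sortDesc x i ≤ ∑ i ∈ Finset.Iic j, sortDesc y i) ∧
    ∑ i, x i = ∑ i, y i

/-- Majorization of vectors of possibly different lengths, padding with zeros. -/
def MajorizedByPad {k m : ℕ} (x : Fin k → ℝ) (y : Fin m → ℝ) : Prop :=
  MajorizedBy (pad x (max k m)) (pad y (max k m))

/-- The frame operator `S_F = ∑ f_i f_i^*` of a finite sequence of vectors in `ℂ^d`. -/
noncomputable def frameOp {d n : ℕ} (F : Fin n → Fin d → ℂ) : Matrix (Fin d) (Fin d) ℂ :=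
  ∑ l, Matrix.vecMulVec (F l) (star (F l))

/-- The squared norm `‖g‖²` of a vector in `ℂ^d`. -/
noncomputable def normSqVec {d : ℕ} (g : Fin d → ℂ) : ℝ :=
  ∑ i, Complex.normSq (g i)

open scoped Classical in
/-- Eigenvalues of a (Hermitian) matrix arranged in decreasing order. -/
noncomputable def eigsDesc {d : ℕ} (S : Matrix (Fin d) (Fin d) ℂ) : Fin d → ℝ :=
  if h : S.IsHermitian then sortDesc h.eigenvalues else 0

open scoped Classical in
/-- Eigenvalues of a (Hermitian) matrix arranged in increasing order. -/
noncomputable def eigsAsc {d : ℕ} (S : Matrix (Fin d) (Fin d) ℂ) : Fin d → ℝ :=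
  if h : S.IsHermitian then sortAsc h.eigenvalues else 0

/-- `Γ_d(a)`: non-increasing nonnegative vectors in `ℝ^d` majorizing `a`. -/
def Gamma {k : ℕ} (d : ℕ) (a : Fin k → ℝ) : Set (Fin d → ℝ) :=
  {μ | Antitone μ ∧ (∀ i, 0 ≤ μ i) ∧ MajorizedByPad a μ}

/-- The convex potential `P_f = tr f(S) = ∑ f(λ_i(S))`. -/
noncomputable def potential {d : ℕ} (f : ℝ → ℝ) (S : Matrix (Fin d) (Fin d) ℂ) : ℝ :=
  ∑ i, f (eigsDesc S i)

/-- Final averages `Q_{j,r} = (1/(r-j)) (∑_{i=j+1}^k a_i + ∑_{i=j+1}^r λ_i)` (1-based). -/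
noncomputable def finalAvg {d k : ℕ} (lam : Fin d → ℝ) (a : Fin k → ℝ) (j r : ℕ) : ℝ :=
  ((∑ i : Fin k, if j ≤ (i : ℕ) then a i else 0) +
      (∑ i : Fin d, if j ≤ (i : ℕ) ∧ (i : ℕ) < r then lam i else 0)) / ((r : ℝ) - (j : ℝ))

/-- Initial averages: `initAvg lam a lo hi = P_{lo+1,hi}` (1-based), i.e. the average of
`h_i = λ_i + a_i` over the (0-based) index window `[lo, hi)`. -/
noncomputable def initAvg {d k : ℕ} (lam : Fin d → ℝ) (a : Fin k → ℝ) (lo hi : ℕ) : ℝ :=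
  ((∑ i : Fin d, if lo ≤ (i : ℕ) ∧ (i : ℕ) < hi then lam i else 0) +
      (∑ i : Fin k, if lo ≤ (i : ℕ) ∧ (i : ℕ) < hi then a i else 0)) / ((hi : ℝ) - (lo : ℝ))

/-- 1-based access to a vector indexed by `Fin d`. -/
noncomputable def get1 {d : ℕ} (lam : Fin d → ℝ) (i : ℕ) : ℝ :=
  if h : i - 1 < d then lam ⟨i - 1, h⟩ else 0

/-- The index `s` is feasible for the pair `(λ, a)`: the unique vector
`ν_s = (c·1_{r-s}, λ_{r+1},…,λ_d)` determined by the truncated data satisfies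
`a^s ≺ ν_s - λ^s`. -/
def FeasibleIdx {d k : ℕ} (lam : Fin d → ℝ) (a : Fin k → ℝ) (s : ℕ) : Prop :=
  ∃ r : ℕ, ∃ c : ℝ, s < r ∧ r ≤ d ∧ 0 < c ∧
    (∀ i : Fin d, s ≤ (i : ℕ) → (i : ℕ) < r → lam i ≤ c) ∧
    (∀ hrd : r < d, c ≤ lam ⟨r, hrd⟩) ∧
    ((r : ℝ) - (s : ℝ)) * c =
      (∑ i : Fin d, if s ≤ (i : ℕ) ∧ (i : ℕ) < r then lam i else 0) +
        (∑ i : Fin k, if s ≤ (i : ℕ) then a i else 0) ∧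
    MajorizedByPad (fun i : Fin (k - s) => a ⟨s + (i : ℕ), by have := i.isLt; omega⟩)
      (fun i : Fin (d - s) =>
        if s + (i : ℕ) < r then c - lam ⟨s + (i : ℕ), by have := i.isLt; omega⟩ else 0)

/-!
For vectors sorted decreasingly, `a ≺ μ` means that `a` arises from `μ` by transfers between pairs
of entries. Restricted to the nonnegative vectors whose partial sums dominate those of `a`, the sum
of squares of `λ + γ` has a minimizer `μ` that is decreasing and leaves a tight partial sum wherever
`λ + μ` increases from one index to a later one. Hence each superlevel set of `λ + μ` is as small as
it can be, so that `λ + μ ≺ λ + γ` for all admissible `γ`, and by Karamata's inequality `μ`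
minimizes every convex potential at once. Vectors in `Γ_d(a)` vanish beyond the `k`-th entry, so
`Γ_d(a)` is `Γ_k(a)` padded with zeros; strict convexity makes the minimizers correspond.

For matrices, Lidskii's inequality `λ↑(S₀) + λ(S_G) ≺ λ(S₀ + S_G)` together with `λ(S_G) ∈ Γ_d(a)`
gives the lower bound. It is attained by diagonalizing `S_G` in an eigenbasis of `S₀`: scaled
eigenvectors have the right frame operator, and rotating pairs of frame vectors, which realizes the
transfers above, corrects their norms without changing it.
-/

section Majorization

lemma add_le_add_of_convexOn {D : Set ℝ} {f : ℝ → ℝ} (hf : ConvexOn ℝ D f) {u v δ : ℝ}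
    (hu : u ∈ D) (hv : v ∈ D) (hδ : 0 ≤ δ) (hle : u + δ ≤ v) :
    f (v - δ) + f (u + δ) ≤ f v + f u := by
  obtain ⟨s, t, hs, ht, hst, hcomb⟩ : u + δ ∈ segment ℝ u v := by
    rw [segment_eq_Icc (by linarith)]
    exact ⟨by linarith, hle⟩
  have hcomb' : s • v + t • u = v - δ := by
    simp only [smul_eq_mul] at hcomb ⊢
    linear_combination (u + v) * hst - hcomb
  have hright := hf.2 hv hu hs ht hst
  have hleft := hf.2 hu hv hs ht hst
  rw [hcomb] at hleft
  rw [hcomb'] at hright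
  simp only [smul_eq_mul] at hleft hright
  linear_combination hleft + hright + (f u + f v) * hst

variable {ι : Type*}

lemma sum_sub_sum_of_eq_off_pair [Fintype ι] {M : Type*} [AddCommGroup M] {u v : ι → M} {j l : ι}
    (hjl : j ≠ l) (huv : ∀ i, i ≠ j → i ≠ l → u i = v i) :
    ∑ i, u i - ∑ i, v i = (u j - v j) + (u l - v l) := by
  rw [← sum_sub_distrib]
  exact Fintype.sum_eq_add j l hjl fun i hi => sub_eq_zero.mpr (huv i hi.1 hi.2)

section Transfer

variable [DecidableEq ι]

/-- The vector `x` after moving the mass `δ` from the coordinate `j` to the coordinate `l`, the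
elementary step between vectors comparable for majorization. -/
def transfer (x : ι → ℝ) (j l : ι) (δ : ℝ) : ι → ℝ :=
  x + Pi.single l δ - Pi.single j δ

variable {x : ι → ℝ} {j l : ι} {δ : ℝ}

lemma transfer_apply_source (hjl : j ≠ l) : transfer x j l δ j = x j - δ := by
  simp [transfer, hjl]

lemma transfer_apply_target (hjl : j ≠ l) : transfer x j l δ l = x l + δ := by
  simp [transfer, hjl.symm]

lemma transfer_apply_of_ne {i : ι} (hj : i ≠ j) (hl : i ≠ l) : transfer x j l δ i = x i := by
  simp [transfer, hj, hl]

lemma sum_transfer (s : Finset ι) :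
    ∑ i ∈ s, transfer x j l δ i =
      ∑ i ∈ s, x i + (if l ∈ s then δ else 0) - (if j ∈ s then δ else 0) := by
  simp [transfer, sum_add_distrib, sum_sub_distrib, sum_pi_single']

lemma sum_comp_transfer_sub [Fintype ι] (g : ι → ℝ → ℝ) (hjl : j ≠ l) :
    ∑ i, g i (transfer x j l δ i) - ∑ i, g i (x i) =
      (g j (x j - δ) - g j (x j)) + (g l (x l + δ) - g l (x l)) := by
  rw [sum_sub_sum_of_eq_off_pair hjl fun i hj hl => by rw [transfer_apply_of_ne hj hl],
    transfer_apply_source hjl, transfer_apply_target hjl]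

lemma transfer_nonneg (hx : ∀ i, 0 ≤ x i) (hjl : j ≠ l) (hδ : 0 ≤ δ) (hle : δ ≤ x j) (i : ι) :
    0 ≤ transfer x j l δ i := by
  rcases eq_or_ne i j with rfl | hij
  · rw [transfer_apply_source hjl]
    linarith
  rcases eq_or_ne i l with rfl | hil
  · rw [transfer_apply_target hjl]
    linarith [hx i]
  · rw [transfer_apply_of_ne hij hil]
    exact hx i

lemma forall_mem_transfer {s : Set ℝ} (hs : Convex ℝ s) (hx : ∀ i, x i ∈ s) (hjl : j ≠ l)
    (hδ : 0 ≤ δ) (hle : x l + δ ≤ x j) (i : ι) : transfer x j l δ i ∈ s := by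
  have mem_of_between {c : ℝ} (hl : x l ≤ c) (hj : c ≤ x j) : c ∈ s :=
    hs.ordConnected.out (hx l) (hx j) ⟨hl, hj⟩
  rcases eq_or_ne i j with rfl | hij
  · rw [transfer_apply_source hjl]
    exact mem_of_between (by linarith) (by linarith)
  rcases eq_or_ne i l with rfl | hil
  · rw [transfer_apply_target hjl]
    exact mem_of_between (by linarith) hle
  · rw [transfer_apply_of_ne hij hil]
    exact hx i

lemma sum_sq_add_transfer_lt [Fintype ι] {c : ι → ℝ} (hδ : 0 < δ)
    (hlt : c l + x l + δ < c j + x j) :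
    ∑ i, (c i + transfer x j l δ i) ^ 2 < ∑ i, (c i + x i) ^ 2 := by
  have hjl : j ≠ l := by
    rintro rfl
    linarith
  have hdiff := sum_comp_transfer_sub (x := x) (δ := δ) (fun i u => (c i + u) ^ 2) hjl
  have hpos : 0 < 2 * δ * (c j + x j - (c l + x l + δ)) := by
    have := sub_pos.mpr hlt
    positivity
  linear_combination hdiff + hpos

end Transfer

variable [Fintype ι] [LinearOrder ι] [LocallyFiniteOrderBot ι]

/-- Majorization without rearrangement: the partial sums of `y` in the given order dominate those
of `x`, and the totals agree. On antitone vectors this is majorization. -/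
def PrefixMajorizedBy (x y : ι → ℝ) : Prop :=
  (∀ p, ∑ i ∈ Iic p, x i ≤ ∑ i ∈ Iic p, y i) ∧ ∑ i, x i = ∑ i, y i

variable {a x y : ι → ℝ} {j l : ι} {δ : ℝ}

namespace PrefixMajorizedBy

protected lemma transfer (h : PrefixMajorizedBy a x) (hδ : 0 ≤ δ)
    (hgap : ∀ p, j ≤ p → p < l → ∑ i ∈ Iic p, a i + δ ≤ ∑ i ∈ Iic p, x i) :
    PrefixMajorizedBy a (transfer x j l δ) := by
  refine ⟨fun p => ?_, by simpa [sum_transfer] using h.2⟩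
  have hp := h.1 p
  rw [sum_transfer]
  by_cases hj : j ≤ p <;> by_cases hl : l ≤ p <;> simp only [mem_Iic, hj, hl, if_true, if_false]
  · linarith
  · linarith [hgap p hj (not_le.mp hl)]
  · linarith
  · linarith

lemma sum_Iio_le (h : PrefixMajorizedBy a x) (i : ι) :
    ∑ p ∈ Iio i, a p ≤ ∑ p ∈ Iio i, x p := by
  rcases (Iio i).eq_empty_or_nonempty with hempty | hne
  · simp [hempty]
  have hIic : Iio i = Iic ((Iio i).max' hne) := by
    ext p
    refine ⟨fun hp => mem_Iic.mpr (le_max' _ p hp), fun hp => ?_⟩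
    exact mem_Iio.mpr ((mem_Iic.mp hp).trans_lt (mem_Iio.mp (max'_mem _ hne)))
  rw [hIic]
  exact h.1 _

lemma exists_excess_before_deficit (h : PrefixMajorizedBy a x) (hne : x ≠ a) :
    ∃ j l, j < l ∧ a j < x j ∧ x l < a l ∧ ∀ i < l, a i ≤ x i := by
  have hdeficit : ∃ l, x l < a l := by
    by_contra! hle
    have heq := (sum_eq_sum_iff_of_le fun i _ => hle i).mp h.2
    exact hne (funext fun i => (heq i (mem_univ i)).symm)
  obtain ⟨l, hl, hmin⟩ := exists_minimal_of_wellFoundedLT (fun i => x i < a i) hdeficit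
  have hbefore : ∀ i < l, a i ≤ x i := fun i hi =>
    not_lt.mp fun hlt => (hmin hlt hi.le).not_gt hi
  suffices ∃ j < l, a j < x j from
    let ⟨j, hjl, hj⟩ := this
    ⟨j, l, hjl, hj, hl, hbefore⟩
  by_contra! hle
  refine (h.1 l).not_gt (sum_lt_sum (fun i hi => ?_) ⟨l, mem_Iic.mpr le_rfl, hl⟩)
  rcases (mem_Iic.mp hi).lt_or_eq with hlt | rfl
  exacts [hle i hlt, hl.le]

lemma exists_transfer_closer (h : PrefixMajorizedBy a x) (ha : Antitone a) (hne : x ≠ a) :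
    ∃ j l δ, j ≠ l ∧ 0 ≤ δ ∧ x l + δ ≤ x j ∧ PrefixMajorizedBy a (transfer x j l δ) ∧
      ({i | transfer x j l δ i ≠ a i} : Finset ι) ⊂ ({i | x i ≠ a i} : Finset ι) := by
  obtain ⟨j, l, hjl, hj, hl, hbefore⟩ := h.exists_excess_before_deficit hne
  obtain ⟨δ, hδj, hδl, hδ⟩ : ∃ δ, δ ≤ x j - a j ∧ δ ≤ a l - x l ∧
      (δ = x j - a j ∨ δ = a l - x l) :=
    ⟨_, min_le_left _ _, min_le_right _ _, min_choice _ _⟩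
  have hδ0 : 0 ≤ δ := by rcases hδ with rfl | rfl <;> linarith
  refine ⟨j, l, δ, hjl.ne, hδ0, by linarith [ha hjl.le], h.transfer hδ0 fun p hjp hpl => ?_, ?_⟩
  · have hexcess : x j - a j ≤ ∑ i ∈ Iic p, (x i - a i) :=
      single_le_sum (f := fun i => x i - a i)
        (fun i hi => sub_nonneg.mpr (hbefore i ((mem_Iic.mp hi).trans_lt hpl))) (mem_Iic.mpr hjp)
    rw [sum_sub_distrib] at hexcess
    linarith
  · have hsub : ({i | transfer x j l δ i ≠ a i} : Finset ι) ⊆ ({i | x i ≠ a i} : Finset ι) := by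
      refine monotone_filter_right _ fun i _ hi => ?_
      rcases eq_or_ne i j with rfl | hij
      · exact hj.ne'
      rcases eq_or_ne i l with rfl | hil
      · exact hl.ne
      · rwa [transfer_apply_of_ne hij hil] at hi
    refine (ssubset_iff_of_subset hsub).mpr ?_
    rcases hδ with rfl | rfl
    · exact ⟨j, by simpa using hj.ne', by simp [transfer_apply_source hjl.ne]⟩
    · exact ⟨l, by simpa using hl.ne, by simp [transfer_apply_target hjl.ne]⟩

theorem transfer_induction {Q : (ι → ℝ) → Prop} (h : PrefixMajorizedBy a x) (ha : Antitone a)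
    (hQ : ∀ z j l δ, j ≠ l → 0 ≤ δ → z l + δ ≤ z j → Q z → Q (transfer z j l δ)) (hx : Q x) :
    Q a := by
  induction hs : ({i | x i ≠ a i} : Finset ι) using Finset.strongInduction generalizing x with
  | H s ih =>
    by_cases hne : x = a
    · exact hne ▸ hx
    obtain ⟨j, l, δ, hjl, hδ, hle, hmaj, hcloser⟩ := h.exists_transfer_closer ha hne
    exact ih _ (hs ▸ hcloser) hmaj (hQ x j l δ hjl hδ hle hx) rfl

end PrefixMajorizedBy

theorem PrefixMajorizedBy.sum_le_sum_of_convexOn {D : Set ℝ} {f : ℝ → ℝ}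
    (h : PrefixMajorizedBy a y) (ha : Antitone a) (hf : ConvexOn ℝ D f) (hy : ∀ i, y i ∈ D) :
    ∑ i, f (a i) ≤ ∑ i, f (y i) := by
  suffices (∀ i, a i ∈ D) ∧ ∑ i, f (a i) ≤ ∑ i, f (y i) from this.2
  refine h.transfer_induction (Q := fun z => (∀ i, z i ∈ D) ∧ ∑ i, f (z i) ≤ ∑ i, f (y i)) ha
    ?_ ⟨hy, le_rfl⟩
  rintro z j l δ hjl hδ hle ⟨hz, hsum⟩
  refine ⟨forall_mem_transfer hf.1 hz hjl hδ hle, ?_⟩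
  have hdiff := sum_comp_transfer_sub (x := z) (δ := δ) (fun _ => f) hjl
  linarith [add_le_add_of_convexOn hf (hz l) (hz j) hδ hle]

end Majorization

section Sorting

variable {m : ℕ} {x y z : Fin m → ℝ}

lemma sortAsc_monotone (x : Fin m → ℝ) : Monotone (sortAsc x) :=
  Tuple.monotone_sort x

lemma sortDesc_antitone (x : Fin m → ℝ) : Antitone (sortDesc x) :=
  fun _ _ h => Tuple.monotone_sort x (Fin.rev_le_rev.mpr h)

lemma exists_sortDesc_eq_comp_perm (x : Fin m → ℝ) :
    ∃ σ : Equiv.Perm (Fin m), sortDesc x = x ∘ σ :=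
  ⟨Fin.revPerm.trans (Tuple.sort x), rfl⟩

lemma sortDesc_of_antitone (hx : Antitone x) : sortDesc x = x := by
  obtain ⟨σ, hσ⟩ := exists_sortDesc_eq_comp_perm x
  have hsorted : Antitone (x ∘ σ) := hσ ▸ sortDesc_antitone x
  exact hσ.trans (Tuple.unique_antitone (τ := 1) hsorted hx)

lemma sum_comp_sortDesc (g : ℝ → ℝ) (x : Fin m → ℝ) :
    ∑ i, g (sortDesc x i) = ∑ i, g (x i) := by
  obtain ⟨σ, hσ⟩ := exists_sortDesc_eq_comp_perm x
  rw [hσ]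
  exact Equiv.sum_comp σ fun i => g (x i)

lemma sum_sortDesc (x : Fin m → ℝ) : ∑ i, sortDesc x i = ∑ i, x i :=
  sum_comp_sortDesc id x

lemma majorizedBy_iff : MajorizedBy x y ↔ PrefixMajorizedBy (sortDesc x) (sortDesc y) := by
  rw [MajorizedBy, PrefixMajorizedBy, sum_sortDesc, sum_sortDesc]

lemma majorizedBy_iff_of_antitone (hx : Antitone x) (hy : Antitone y) :
    MajorizedBy x y ↔ PrefixMajorizedBy x y := by
  rw [majorizedBy_iff, sortDesc_of_antitone hx, sortDesc_of_antitone hy]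

lemma majorizedBy_sortDesc_left : MajorizedBy (sortDesc x) y ↔ MajorizedBy x y := by
  rw [majorizedBy_iff, majorizedBy_iff, sortDesc_of_antitone (sortDesc_antitone x)]

lemma MajorizedBy.trans (hxy : MajorizedBy x y) (hyz : MajorizedBy y z) : MajorizedBy x z :=
  ⟨fun j => (hxy.1 j).trans (hyz.1 j), hxy.2.trans hyz.2⟩

theorem MajorizedBy.sum_le_sum_of_convexOn {D : Set ℝ} {f : ℝ → ℝ} (h : MajorizedBy x y)
    (hf : ConvexOn ℝ D f) (hy : ∀ i, y i ∈ D) : ∑ i, f (x i) ≤ ∑ i, f (y i) := by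
  have hy' : ∀ i, sortDesc y i ∈ D := fun i => hy _
  simpa only [sum_comp_sortDesc] using
    (majorizedBy_iff.mp h).sum_le_sum_of_convexOn (sortDesc_antitone x) hf hy'

lemma sum_sub_le_sum_max_sub (s : Finset (Fin m)) (x : Fin m → ℝ) (t : ℝ) :
    ∑ i ∈ s, (x i - t) ≤ ∑ i, max (x i - t) 0 :=
  (sum_le_sum fun _ _ => le_max_left _ _).trans
    (sum_le_sum_of_subset_of_nonneg (subset_univ s) fun _ _ _ => le_max_right _ _)

lemma sum_max_sub_eq_sum_sub {s : Finset (Fin m)} {x : Fin m → ℝ} {t : ℝ}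
    (hmem : ∀ i ∈ s, t ≤ x i) (hnotMem : ∀ i ∉ s, x i ≤ t) :
    ∑ i, max (x i - t) 0 = ∑ i ∈ s, (x i - t) := by
  rw [← sum_subset (subset_univ s) fun i _ hi => max_eq_right (sub_nonpos.mpr (hnotMem i hi))]
  exact sum_congr rfl fun i hi => max_eq_left (sub_nonneg.mpr (hmem i hi))

lemma majorizedBy_of_sum_max_sub_le (hsum : ∑ i, x i = ∑ i, y i)
    (h : ∀ t : ℝ, ∑ i, max (x i - t) 0 ≤ ∑ i, max (y i - t) 0) : MajorizedBy x y := by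
  refine ⟨fun j => ?_, hsum⟩
  have hy := sortDesc_antitone y
  have hle : ∑ i ∈ Iic j, (sortDesc x i - sortDesc y j) ≤
      ∑ i ∈ Iic j, (sortDesc y i - sortDesc y j) := by
    calc ∑ i ∈ Iic j, (sortDesc x i - sortDesc y j)
      _ ≤ ∑ i, max (sortDesc x i - sortDesc y j) 0 := sum_sub_le_sum_max_sub _ _ _
      _ = ∑ i, max (x i - sortDesc y j) 0 := sum_comp_sortDesc (fun u => max (u - _) 0) x
      _ ≤ ∑ i, max (y i - sortDesc y j) 0 := h _
      _ = ∑ i, max (sortDesc y i - sortDesc y j) 0 :=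
          (sum_comp_sortDesc (fun u => max (u - _) 0) y).symm
      _ = ∑ i ∈ Iic j, (sortDesc y i - sortDesc y j) :=
          sum_max_sub_eq_sum_sub (fun i hi => hy (mem_Iic.mp hi))
            fun i hi => hy (not_le.mp (mem_Iic.not.mp hi)).le
  simpa only [sum_sub_distrib, sub_le_sub_iff_right] using hle

lemma majorizedBy_of_sum_superlevel_le (hsum : ∑ i, x i = ∑ i, y i)
    (h : ∀ t : ℝ, ∑ i with t < x i, x i ≤ ∑ i with t < x i, y i) : MajorizedBy x y := by
  refine majorizedBy_of_sum_max_sub_le hsum fun t => ?_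
  calc ∑ i, max (x i - t) 0
    _ = ∑ i with t < x i, (x i - t) :=
        sum_max_sub_eq_sum_sub (fun i hi => (mem_filter.mp hi).2.le) (by simp)
    _ ≤ ∑ i with t < x i, (y i - t) := by
        simpa only [sum_sub_distrib, sub_le_sub_iff_right] using h t
    _ ≤ ∑ i, max (y i - t) 0 := sum_sub_le_sum_max_sub _ _ _

end Sorting

section PrefixMajorants

variable {ι : Type*} [Fintype ι] [LinearOrder ι] [LocallyFiniteOrderBot ι]

/-- The nonnegative vectors that dominate `b` for prefix majorization. Dropping the requirement that
they be antitone makes this set stable under small transfers; antitonicity of the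
minimizers is recovered afterwards. -/
def prefixMajorants (b : ι → ℝ) : Set (ι → ℝ) :=
  {μ | (∀ i, 0 ≤ μ i) ∧ PrefixMajorizedBy b μ}

variable {lam b μ γ : ι → ℝ} {i j : ι} {δ : ℝ}

lemma isCompact_prefixMajorants (b : ι → ℝ) : IsCompact (prefixMajorants b) := by
  have hbounded : prefixMajorants b ⊆ Set.Icc 0 fun _ => ∑ i, b i := fun μ hμ =>
    ⟨hμ.1, fun i => hμ.2.2 ▸ single_le_sum (fun p _ => hμ.1 p) (mem_univ i)⟩
  refine isCompact_Icc.of_isClosed_subset ?_ hbounded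
  simp only [prefixMajorants, PrefixMajorizedBy, Set.ofPred_and, Set.ofPred_forall]
  refine (isClosed_iInter fun i => isClosed_le continuous_const (continuous_apply i)).inter
    ((isClosed_iInter fun p => isClosed_le continuous_const ?_).inter
      (isClosed_eq continuous_const ?_)) <;> fun_prop

lemma convex_prefixMajorants (b : ι → ℝ) : Convex ℝ (prefixMajorants b) := by
  rintro x ⟨hx0, hx, hxsum⟩ y ⟨hy0, hy, hysum⟩ p q hp hq hpq
  have hcomb (s : Finset ι) :
      ∑ i ∈ s, (p • x + q • y) i = p * ∑ i ∈ s, x i + q * ∑ i ∈ s, y i := by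
    simp only [Pi.add_apply, Pi.smul_apply, smul_eq_mul, sum_add_distrib, mul_sum]
  refine ⟨fun i => add_nonneg (mul_nonneg hp (hx0 i)) (mul_nonneg hq (hy0 i)), fun j => ?_, ?_⟩
  · rw [hcomb]
    linear_combination p * hx j + q * hy j - (∑ i ∈ Iic j, b i) * hpq
  · rw [hcomb]
    linear_combination p * hxsum + q * hysum - (∑ i, b i) * hpq

lemma transfer_mem_prefixMajorants (hμ : μ ∈ prefixMajorants b) (hij : i ≠ j) (hδ : 0 ≤ δ)
    (hle : δ ≤ μ i) (hgap : ∀ p, i ≤ p → p < j → ∑ q ∈ Iic p, b q + δ ≤ ∑ q ∈ Iic p, μ q) :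
    transfer μ i j δ ∈ prefixMajorants b :=
  ⟨transfer_nonneg hμ.1 hij hδ hle, hμ.2.transfer hδ hgap⟩

lemma exists_tight_prefix_of_isMinOn (hμ : μ ∈ prefixMajorants b)
    (hmin : IsMinOn (fun γ => ∑ p, (lam p + γ p) ^ 2) (prefixMajorants b) μ)
    (hlt : lam j + μ j < lam i + μ i) (hi : 0 < μ i) :
    ∃ p, i ≤ p ∧ p < j ∧ ∑ q ∈ Iic p, b q = ∑ q ∈ Iic p, μ q := by
  by_contra! hloose
  have hij : i ≠ j := by
    rintro rfl
    exact lt_irrefl _ hlt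
  obtain ⟨ε, hε, hgap⟩ := Pi.exists_forall_pos_add_lt (ι := {p // i ≤ p ∧ p < j})
    fun p => (hμ.2.1 p).lt_of_ne (hloose p p.2.1 p.2.2)
  obtain ⟨δ, hδ, hδlt⟩ := exists_between (lt_min hε (lt_min hi (sub_pos.mpr hlt)))
  obtain ⟨hδε, hδμ, hδlam⟩ : δ < ε ∧ δ < μ i ∧ δ < lam i + μ i - (lam j + μ j) := by
    simpa only [lt_min_iff] using hδlt
  have hmem : transfer μ i j δ ∈ prefixMajorants b :=
    transfer_mem_prefixMajorants hμ hij hδ.le hδμ.le fun p hip hpj => by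
      linarith [hgap ⟨p, hip, hpj⟩]
  exact (hmin hmem).not_gt (sum_sq_add_transfer_lt hδ (by linarith))

lemma antitone_of_isMinOn_sum_sq (hlam : Monotone lam) (hμ : μ ∈ prefixMajorants b)
    (hmin : IsMinOn (fun γ => ∑ p, (lam p + γ p) ^ 2) (prefixMajorants b) μ) : Antitone μ := by
  intro i j hij
  by_contra! hlt
  obtain ⟨p, hjp, hpi, -⟩ := exists_tight_prefix_of_isMinOn hμ hmin
    (add_lt_add_of_le_of_lt (hlam hij) hlt) ((hμ.1 i).trans_lt hlt)
  exact (hjp.trans_lt hpi).not_ge hij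

lemma sum_le_sum_of_separated_by_tight_prefix {s : Finset ι} (hμ : PrefixMajorizedBy b μ)
    (hγ : γ ∈ prefixMajorants b)
    (htight : ∀ i ∈ s, 0 < μ i → ∀ j ∉ s, ∃ p, i ≤ p ∧ p < j ∧
      ∑ q ∈ Iic p, b q = ∑ q ∈ Iic p, μ q) :
    ∑ i ∈ s, μ i ≤ ∑ i ∈ s, γ i := by
  rcases ({i ∈ s | 0 < μ i} : Finset ι).eq_empty_or_nonempty with hzero | hpos
  · exact sum_le_sum fun i hi => (not_lt.mp (filter_eq_empty_iff.mp hzero hi)).trans (hγ.1 i)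
  rcases sᶜ.eq_empty_or_nonempty with hfull | hcompl
  · rw [(compl_eq_empty_iff s).mp hfull, ← hμ.2, ← hγ.2.2]
  obtain ⟨his, hi⟩ := mem_filter.mp (max'_mem _ hpos)
  obtain ⟨p, hip, hpj, heq⟩ := htight _ his hi _ (mem_compl.mp (min'_mem _ hcompl))
  have hsub : Iic p ⊆ s := fun q hq => by
    by_contra hqs
    exact (min'_le _ q (mem_compl.mpr hqs)).not_gt ((mem_Iic.mp hq).trans_lt hpj)
  have hbeyond : ∀ q ∈ s, q ∉ Iic p → μ q ≤ 0 := fun q hqs hq => by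
    by_contra! hqpos
    exact hq (mem_Iic.mpr ((le_max' _ q (mem_filter.mpr ⟨hqs, hqpos⟩)).trans hip))
  calc ∑ i ∈ s, μ i
    _ = ∑ i ∈ s \ Iic p, μ i + ∑ i ∈ Iic p, μ i := (sum_sdiff hsub).symm
    _ ≤ ∑ i ∈ s \ Iic p, γ i + ∑ i ∈ Iic p, γ i :=
        add_le_add
          (sum_le_sum fun q hq =>
            (hbeyond q (mem_sdiff.mp hq).1 (mem_sdiff.mp hq).2).trans (hγ.1 q))
          (heq.symm.trans_le (hγ.2.1 p))
    _ = ∑ i ∈ s, γ i := sum_sdiff hsub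

theorem exists_forall_majorizedBy_add {m : ℕ} {lam b : Fin m → ℝ} (hlam : Monotone lam)
    (hb : ∀ i, 0 ≤ b i) :
    ∃ μ ∈ prefixMajorants b, Antitone μ ∧
      ∀ γ ∈ prefixMajorants b, MajorizedBy (lam + μ) (lam + γ) := by
  obtain ⟨μ, hμ, hmin⟩ := (isCompact_prefixMajorants b).exists_isMinOn
    ⟨b, hb, fun _ => le_rfl, rfl⟩
    (f := fun γ => ∑ p, (lam p + γ p) ^ 2) (by fun_prop)
  refine ⟨μ, hμ, antitone_of_isMinOn_sum_sq hlam hμ hmin, fun γ hγ =>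
    majorizedBy_of_sum_superlevel_le ?_ fun t => ?_⟩
  · simp only [Pi.add_apply, sum_add_distrib, ← hμ.2.2, ← hγ.2.2]
  · simp only [Pi.add_apply, sum_add_distrib, add_le_add_iff_left]
    refine sum_le_sum_of_separated_by_tight_prefix hμ.2 hγ fun i hi hpos j hj =>
      exists_tight_prefix_of_isMinOn hμ hmin ?_ hpos
    simp only [mem_filter, mem_univ, true_and, not_lt] at hi hj
    exact hj.trans_lt hi

lemma eq_zero_of_mem_prefixMajorants (hμ : μ ∈ prefixMajorants b) {i : ι}
    (hb : ∀ p, i ≤ p → b p = 0) : μ i = 0 := by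
  have hprefix : ∑ p, μ p ≤ ∑ p ∈ Iio i, μ p := by
    rw [← hμ.2.2, ← sum_subset (subset_univ (Iio i)) fun p _ hp =>
      hb p (not_lt.mp (mem_Iio.not.mp hp))]
    exact hμ.2.sum_Iio_le i
  have hle : ∑ p ∈ Iic i, μ p ≤ ∑ p, μ p := sum_le_univ_sum_of_nonneg hμ.1
  rw [← Iio_insert, sum_insert notMem_Iio_self] at hle
  exact le_antisymm (by linarith) (hμ.1 i)

end PrefixMajorants

section Padding

variable {k d : ℕ} {x y : Fin k → ℝ}

lemma pad_castLE (hkd : k ≤ d) (x : Fin k → ℝ) (i : Fin k) : pad x d (i.castLE hkd) = x i :=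
  dif_pos i.isLt

lemma pad_apply_of_le {i : Fin d} (hi : k ≤ i) : pad x d i = 0 :=
  dif_neg hi.not_gt

lemma pad_self (x : Fin k → ℝ) : pad x k = x :=
  funext (pad_castLE le_rfl x)

lemma pad_nonneg (hx : ∀ i, 0 ≤ x i) (i : Fin d) : 0 ≤ pad x d i := by
  unfold pad
  split_ifs
  exacts [hx _, le_rfl]

lemma antitone_pad (hx : Antitone x) (hx0 : ∀ i, 0 ≤ x i) : Antitone (pad x d) := by
  intro i j hij
  by_cases hj : (j : ℕ) < k
  · have hi : (i : ℕ) < k := lt_of_le_of_lt hij hj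
    simpa only [pad, hi, hj, dif_pos] using hx (Fin.mk_le_mk.mpr hij)
  · rw [pad_apply_of_le (not_lt.mp hj)]
    exact pad_nonneg hx0 i

lemma sum_eq_sum_castLE {M : Type*} [AddCommMonoid M] (hkd : k ≤ d) {F : Fin d → M}
    (hF : ∀ i : Fin d, k ≤ i → F i = 0) : ∑ i, F i = ∑ i : Fin k, F (i.castLE hkd) := by
  obtain ⟨r, rfl⟩ := Nat.exists_eq_add_of_le hkd
  rw [Fin.sum_univ_add, sum_eq_zero fun i _ => hF (Fin.natAdd k i) (Nat.le_add_right k i),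
    add_zero]
  rfl

lemma sum_pad (hkd : k ≤ d) (x : Fin k → ℝ) : ∑ i, pad x d i = ∑ i, x i := by
  simp only [sum_eq_sum_castLE hkd fun _ => pad_apply_of_le, pad_castLE]

lemma sum_Iic_castLE_pad (hkd : k ≤ d) (x : Fin k → ℝ) (p : Fin k) :
    ∑ i ∈ Iic (p.castLE hkd), pad x d i = ∑ i ∈ Iic p, x i := by
  simp only [Fin.sum_Iic_castLE, pad_castLE]

lemma sum_Iic_pad_of_le (hkd : k ≤ d) (x : Fin k → ℝ) {p : Fin d} (hp : k ≤ p) :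
    ∑ i ∈ Iic p, pad x d i = ∑ i, x i := by
  rw [← sum_pad hkd, sum_subset (subset_univ (Iic p)) fun i _ hi =>
    pad_apply_of_le (hp.trans (not_le.mp (mem_Iic.not.mp hi)).le)]

lemma prefixMajorizedBy_pad_iff (hkd : k ≤ d) :
    PrefixMajorizedBy (pad x d) (pad y d) ↔ PrefixMajorizedBy x y := by
  rw [PrefixMajorizedBy, PrefixMajorizedBy, sum_pad hkd, sum_pad hkd]
  refine and_congr_left fun hsum => ⟨fun h p => ?_, fun h p => ?_⟩
  · simpa only [sum_Iic_castLE_pad] using h (p.castLE hkd)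
  · rcases lt_or_ge (p : ℕ) k with hp | hp
    · obtain ⟨q, rfl⟩ : ∃ q, p = Fin.castLE hkd q := ⟨⟨p, hp⟩, rfl⟩
      simpa only [sum_Iic_castLE_pad] using h q
    · simp only [sum_Iic_pad_of_le hkd _ hp, hsum, le_rfl]

end Padding

section Gamma

variable {k d : ℕ} {a : Fin k → ℝ}

lemma mem_Gamma_iff (hkd : k ≤ d) (ha : Antitone a) (ha0 : ∀ i, 0 ≤ a i) {μ : Fin d → ℝ} :
    μ ∈ Gamma d a ↔ Antitone μ ∧ μ ∈ prefixMajorants (pad a d) := by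
  refine and_congr_right fun hμ => and_congr_right fun _ => ?_
  rw [MajorizedByPad, max_eq_right hkd, pad_self,
    majorizedBy_iff_of_antitone (antitone_pad ha ha0) hμ]

lemma mem_Gamma_self_iff (ha : Antitone a) (ha0 : ∀ i, 0 ≤ a i) {μ : Fin k → ℝ} :
    μ ∈ Gamma k a ↔ Antitone μ ∧ μ ∈ prefixMajorants a := by
  rw [mem_Gamma_iff le_rfl ha ha0, pad_self]

lemma Gamma_eq_image_pad (hkd : k ≤ d) (ha : Antitone a) (ha0 : ∀ i, 0 ≤ a i) :
    Gamma d a = (pad · d) '' Gamma k a := by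
  ext μ
  rw [mem_Gamma_iff hkd ha ha0]
  refine ⟨fun ⟨hμ, hmem⟩ => ?_, ?_⟩
  · have hpad : pad (fun i => μ (i.castLE hkd)) d = μ := by
      ext i
      rcases lt_or_ge (i : ℕ) k with hi | hi
      · exact dif_pos hi
      · rw [pad_apply_of_le hi, eq_zero_of_mem_prefixMajorants hmem fun p hp =>
          pad_apply_of_le (hi.trans hp)]
    have hprefix := hmem.2
    rw [← hpad, prefixMajorizedBy_pad_iff hkd] at hprefix
    exact ⟨_, (mem_Gamma_self_iff ha ha0).mpr
      ⟨fun i j hij => hμ hij, fun i => hmem.1 _, hprefix⟩, hpad⟩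
  · rintro ⟨μ', hμ', rfl⟩
    obtain ⟨hanti, hnonneg, hprefix⟩ := (mem_Gamma_self_iff ha ha0).mp hμ'
    exact ⟨antitone_pad hanti hnonneg, pad_nonneg hnonneg,
      (prefixMajorizedBy_pad_iff hkd).mpr hprefix⟩

lemma convex_Gamma (hkd : k ≤ d) (ha : Antitone a) (ha0 : ∀ i, 0 ≤ a i) :
    Convex ℝ (Gamma d a) := by
  intro x hx y hy p q hp hq hpq
  rw [mem_Gamma_iff hkd ha ha0] at hx hy ⊢
  exact ⟨(hx.1.const_smul hp).add (hy.1.const_smul hq),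
    convex_prefixMajorants _ hx.2 hy.2 hp hq hpq⟩

lemma exists_mem_Gamma_forall_majorizedBy_add (hkd : k ≤ d) (ha : Antitone a)
    (ha0 : ∀ i, 0 ≤ a i) {lam : Fin d → ℝ} (hlam : Monotone lam) :
    ∃ μ ∈ Gamma d a, ∀ γ ∈ Gamma d a, MajorizedBy (lam + μ) (lam + γ) := by
  obtain ⟨μ, hmem, hμ, hmaj⟩ :=
    exists_forall_majorizedBy_add (b := pad a d) hlam (pad_nonneg ha0)
  exact ⟨μ, (mem_Gamma_iff hkd ha ha0).mpr ⟨hμ, hmem⟩, fun γ hγ =>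
    hmaj γ ((mem_Gamma_iff hkd ha ha0).mp hγ).2⟩

end Gamma

section Minimizers

lemma strictConvexOn_sum_comp_add {ι : Type*} [Fintype ι] {s : Set (ι → ℝ)} {D : Set ℝ}
    {f : ℝ → ℝ} {c : ι → ℝ} (hs : Convex ℝ s) (hf : StrictConvexOn ℝ D f)
    (hsD : ∀ x ∈ s, ∀ i, c i + x i ∈ D) :
    StrictConvexOn ℝ s fun x => ∑ i, f (c i + x i) := by
  refine ⟨hs, fun x hx y hy hxy p q hp hq hpq => ?_⟩
  have hcomb (i : ι) : c i + (p • x + q • y) i = p • (c i + x i) + q • (c i + y i) := by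
    simp only [Pi.add_apply, Pi.smul_apply, smul_eq_mul]
    linear_combination -c i * hpq
  simp only [hcomb, smul_sum, ← sum_add_distrib]
  obtain ⟨i, hi⟩ := Function.ne_iff.mp hxy
  exact sum_lt_sum
    (fun i _ => hf.convexOn.2 (hsD x hx i) (hsD y hy i) hp.le hq.le hpq)
    ⟨i, mem_univ i, hf.2 (hsD x hx i) (hsD y hy i) (by simpa using hi) hp hq hpq⟩

variable {k d : ℕ} {a : Fin k → ℝ} {f : ℝ → ℝ} {lam : Fin d → ℝ}

lemma isMinOn_pad (hkd : k ≤ d) (ha : Antitone a) (ha0 : ∀ i, 0 ≤ a i) {μ : Fin k → ℝ}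
    (hμ : IsMinOn (fun γ => ∑ i, f (lam (i.castLE hkd) + γ i)) (Gamma k a) μ) :
    IsMinOn (fun γ => ∑ i, f (lam i + γ i)) (Gamma d a) (pad μ d) := by
  rw [Gamma_eq_image_pad hkd ha ha0, isMinOn_iff]
  rintro _ ⟨γ, hγ, rfl⟩
  rw [← sub_nonneg, ← sum_sub_distrib, sum_eq_sum_castLE hkd fun i hi => by
    simp only [pad_apply_of_le hi, sub_self]]
  simpa only [pad_castLE, sum_sub_distrib, sub_nonneg] using isMinOn_iff.mp hμ γ hγ

lemma eq_of_isMinOn_Gamma (hkd : k ≤ d) (ha : Antitone a) (ha0 : ∀ i, 0 ≤ a i)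
    (hf : StrictConvexOn ℝ (Set.Ici 0) f) (hlam : ∀ i, 0 ≤ lam i) {μ μ' : Fin d → ℝ}
    (hμ : μ ∈ Gamma d a) (hμ' : μ' ∈ Gamma d a)
    (hmin : IsMinOn (fun γ => ∑ i, f (lam i + γ i)) (Gamma d a) μ)
    (hmin' : IsMinOn (fun γ => ∑ i, f (lam i + γ i)) (Gamma d a) μ') : μ = μ' :=
  (strictConvexOn_sum_comp_add (convex_Gamma hkd ha ha0) hf fun _ hγ i =>
    add_nonneg (hlam i) (hγ.2.1 i)).eq_of_isMinOn hmin hmin' hμ hμ'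

lemma isMinOn_of_forall_majorizedBy_add (hf : ConvexOn ℝ (Set.Ici 0) f) (hlam : ∀ i, 0 ≤ lam i)
    {μ : Fin d → ℝ} (hμ : ∀ γ ∈ Gamma d a, MajorizedBy (lam + μ) (lam + γ)) :
    IsMinOn (fun γ => ∑ i, f (lam i + γ i)) (Gamma d a) μ :=
  isMinOn_iff.mpr fun γ hγ =>
    (hμ γ hγ).sum_le_sum_of_convexOn hf fun i => add_nonneg (hlam i) (hγ.2.1 i)

end Minimizers

section ConjDiag

open Matrix
open scoped MatrixOrder

lemma exists_ne_zero_mulVec_eq_zero {n 𝕜 : Type*} [Fintype n] [LinearOrder n] [Field 𝕜]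
    (A B : Matrix n n 𝕜) (i : n) :
    ∃ v ≠ 0, (∀ j, i < j → (A *ᵥ v) j = 0) ∧ ∀ j < i, (B *ᵥ v) j = 0 := by
  let M : Matrix n n 𝕜 := of fun j => if i < j then A j else if j < i then B j else 0
  have hdet : M.det = 0 := det_eq_zero_of_row_eq_zero i fun q => by simp [M]
  obtain ⟨v, hv, hMv⟩ := exists_mulVec_eq_zero_iff.mpr hdet
  refine ⟨v, hv, fun j hj => ?_, fun j hj => ?_⟩
  · simpa [M, mulVec, hj] using congrFun hMv j
  · simpa [M, mulVec, hj, hj.not_gt] using congrFun hMv j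

variable {n 𝕜 : Type*} [Fintype n] [DecidableEq n] [RCLike 𝕜] {x y : n → ℝ}

/-- The Hermitian matrix `U diag(x) U*`, as an algebra homomorphism in the real vector `x`. -/
noncomputable def conjDiag (U : unitaryGroup n 𝕜) : (n → ℝ) →ₐ[ℝ] Matrix n n 𝕜 :=
  ((Unitary.conjStarAlgAut ℝ (Matrix n n 𝕜) U : Matrix n n 𝕜 →ₐ[ℝ] Matrix n n 𝕜).comp
    (diagonalAlgHom ℝ)).comp ((Algebra.ofId ℝ 𝕜).compLeft n)

lemma conjDiag_eq_mul (U : unitaryGroup n 𝕜) (x : n → ℝ) :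
    conjDiag U x = (U : Matrix n n 𝕜) * diagonal (RCLike.ofReal ∘ x) * (U : Matrix n n 𝕜)ᴴ :=
  rfl

lemma conjDiag_apply (U : unitaryGroup n 𝕜) (x : n → ℝ) (p q : n) :
    conjDiag U x p q = ∑ i, U p i * x i * star (U q i) := by
  rw [conjDiag_eq_mul, mul_apply]
  simp only [mul_diagonal, conjTranspose_apply, Function.comp_apply]

lemma trace_conjDiag (U : unitaryGroup n 𝕜) (x : n → ℝ) :
    (conjDiag U x).trace = ∑ i, (x i : 𝕜) := by
  rw [conjDiag_eq_mul, trace_mul_comm, ← Matrix.mul_assoc, ← star_eq_conjTranspose,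
    Unitary.coe_star_mul_self, Matrix.one_mul, trace_diagonal]
  rfl

lemma isHermitian_conjDiag (U : unitaryGroup n 𝕜) (x : n → ℝ) : (conjDiag U x).IsHermitian :=
  isHermitian_mul_mul_conjTranspose _ <|
    isHermitian_diagonal_of_self_adjoint _ <| funext fun _ => RCLike.conj_ofReal _

lemma conjDiag_nonneg (U : unitaryGroup n 𝕜) (hx : 0 ≤ x) : 0 ≤ conjDiag U x :=
  nonneg_iff_posSemidef.mpr <| PosSemidef.mul_mul_conjTranspose_same
    (PosSemidef.diagonal fun i => RCLike.ofReal_nonneg.mpr (hx i)) _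

lemma conjDiag_mono (U : unitaryGroup n 𝕜) (h : x ≤ y) : conjDiag U x ≤ conjDiag U y := by
  rw [← sub_nonneg, ← map_sub]
  exact conjDiag_nonneg U (sub_nonneg.mpr h)

lemma exists_conjDiag_comp_perm (U : unitaryGroup n 𝕜) (x : n → ℝ) (σ : Equiv.Perm n) :
    ∃ V : unitaryGroup n 𝕜, conjDiag V (x ∘ σ) = conjDiag U x := by
  have hV : (U : Matrix n n 𝕜).submatrix id σ ∈ unitaryGroup n 𝕜 := by
    rw [mem_unitaryGroup_iff', star_eq_conjTranspose, conjTranspose_submatrix,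
      ← submatrix_mul _ _ _ _ _ Function.bijective_id, ← star_eq_conjTranspose,
      Unitary.coe_star_mul_self, submatrix_one_equiv]
  refine ⟨⟨_, hV⟩, ?_⟩
  ext p q
  rw [conjDiag_apply, conjDiag_apply]
  exact Equiv.sum_comp σ fun i => U p i * (x i : 𝕜) * star (U q i)

lemma star_dotProduct_conjDiag_mulVec (U : unitaryGroup n 𝕜) (x : n → ℝ) (v : n → 𝕜) :
    star v ⬝ᵥ conjDiag U x *ᵥ v =
      ((∑ i, x i * ‖((U : Matrix n n 𝕜)ᴴ *ᵥ v) i‖ ^ 2 : ℝ) : 𝕜) := by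
  rw [conjDiag_eq_mul, ← mulVec_mulVec, ← mulVec_mulVec, dotProduct_mulVec,
    ← conjTranspose_conjTranspose (U : Matrix n n 𝕜), ← star_mulVec, conjTranspose_conjTranspose]
  push_cast
  refine sum_congr rfl fun i _ => ?_
  rw [mulVec_diagonal, ← RCLike.conj_mul, Pi.star_apply, RCLike.star_def, Function.comp_apply]
  ring

lemma sum_norm_sq_conjTranspose_mulVec (U : unitaryGroup n 𝕜) (v : n → 𝕜) :
    ((∑ i, ‖((U : Matrix n n 𝕜)ᴴ *ᵥ v) i‖ ^ 2 : ℝ) : 𝕜) = star v ⬝ᵥ v := by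
  simpa only [map_one, one_mulVec, Pi.one_apply, one_mul] using
    (star_dotProduct_conjDiag_mulVec U 1 v).symm

variable [LinearOrder n]

/- Weyl monotonicity. A vector orthogonal to the columns of `U` after the `i`-th and to those of `W`
before it has `x i` as a lower bound for its first Rayleigh quotient and `y i` as an upper bound
for its second one. -/
theorem le_of_conjDiag_le {U W : unitaryGroup n 𝕜} (hx : Antitone x) (hy : Antitone y)
    (h : conjDiag U x ≤ conjDiag W y) : x ≤ y := by
  intro i
  obtain ⟨v, hv, hU, hW⟩ :=
    exists_ne_zero_mulVec_eq_zero (U : Matrix n n 𝕜)ᴴ (W : Matrix n n 𝕜)ᴴ i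
  set u : n → ℝ := fun j => ‖((U : Matrix n n 𝕜)ᴴ *ᵥ v) j‖ ^ 2 with hu
  set w : n → ℝ := fun j => ‖((W : Matrix n n 𝕜)ᴴ *ᵥ v) j‖ ^ 2 with hw
  have hsum : ∑ j, u j = ∑ j, w j := RCLike.ofReal_injective (K := 𝕜) <|
    (sum_norm_sq_conjTranspose_mulVec U v).trans (sum_norm_sq_conjTranspose_mulVec W v).symm
  have hpos : 0 < ∑ j, u j := by
    rw [← RCLike.ofReal_pos (K := 𝕜), sum_norm_sq_conjTranspose_mulVec U v]
    exact dotProduct_star_self_pos_iff.mpr hv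
  have hlower : x i * ∑ j, u j ≤ ∑ j, x j * u j := by
    rw [mul_sum]
    refine sum_le_sum fun j _ => ?_
    rcases le_or_gt j i with hj | hj
    · exact mul_le_mul_of_nonneg_right (hx hj) (sq_nonneg _)
    · simp [hu, hU j hj]
  have hupper : ∑ j, y j * w j ≤ y i * ∑ j, w j := by
    rw [mul_sum]
    refine sum_le_sum fun j _ => ?_
    rcases lt_or_ge j i with hj | hj
    · simp [hw, hW j hj]
    · exact mul_le_mul_of_nonneg_right (hy hj) (sq_nonneg _)
  have hquad : ∑ j, x j * u j ≤ ∑ j, y j * w j := by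
    have := (le_iff.mp h).dotProduct_mulVec_nonneg v
    rwa [sub_mulVec, dotProduct_sub, sub_nonneg, star_dotProduct_conjDiag_mulVec,
      star_dotProduct_conjDiag_mulVec, RCLike.ofReal_le_ofReal] at this
  rw [← hsum] at hupper
  exact le_of_mul_le_mul_right (hlower.trans (hquad.trans hupper)) hpos

end ConjDiag

section Eigenvalues

open Matrix
open scoped MatrixOrder

variable {d : ℕ} {A B S T : Matrix (Fin d) (Fin d) ℂ}

lemma eigsDesc_antitone (S : Matrix (Fin d) (Fin d) ℂ) : Antitone (eigsDesc S) := by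
  rw [eigsDesc]
  split_ifs
  exacts [sortDesc_antitone _, antitone_const]

lemma eigsAsc_monotone (S : Matrix (Fin d) (Fin d) ℂ) : Monotone (eigsAsc S) := by
  rw [eigsAsc]
  split_ifs
  exacts [sortAsc_monotone _, monotone_const]

lemma eigsDesc_nonneg (hS : S.PosSemidef) (i : Fin d) : 0 ≤ eigsDesc S i := by
  rw [eigsDesc, dif_pos hS.1]
  exact hS.eigenvalues_nonneg _

lemma eigsAsc_nonneg (hS : S.PosSemidef) (i : Fin d) : 0 ≤ eigsAsc S i := by
  rw [eigsAsc, dif_pos hS.1]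
  exact hS.eigenvalues_nonneg _

lemma exists_conjDiag_eigenvalues_comp_perm (hS : S.IsHermitian) (σ : Equiv.Perm (Fin d)) :
    ∃ U : unitaryGroup (Fin d) ℂ, conjDiag U (hS.eigenvalues ∘ σ) = S := by
  obtain ⟨U, hU⟩ := exists_conjDiag_comp_perm hS.eigenvectorUnitary hS.eigenvalues σ
  exact ⟨U, hU.trans hS.spectral_theorem.symm⟩

lemma exists_conjDiag_eigsDesc (hS : S.IsHermitian) :
    ∃ U : unitaryGroup (Fin d) ℂ, conjDiag U (eigsDesc S) = S := by
  obtain ⟨σ, hσ⟩ := exists_sortDesc_eq_comp_perm hS.eigenvalues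
  rw [eigsDesc, dif_pos hS, hσ]
  exact exists_conjDiag_eigenvalues_comp_perm hS σ

lemma exists_conjDiag_eigsAsc (hS : S.IsHermitian) :
    ∃ U : unitaryGroup (Fin d) ℂ, conjDiag U (eigsAsc S) = S := by
  rw [eigsAsc, dif_pos hS]
  exact exists_conjDiag_eigenvalues_comp_perm hS _

theorem eigsDesc_mono (hA : A.IsHermitian) (hB : B.IsHermitian) (h : A ≤ B) :
    eigsDesc A ≤ eigsDesc B := by
  obtain ⟨U, hU⟩ := exists_conjDiag_eigsDesc hA
  obtain ⟨W, hW⟩ := exists_conjDiag_eigsDesc hB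
  exact le_of_conjDiag_le (eigsDesc_antitone A) (eigsDesc_antitone B)
    (hU.trans_le (h.trans_eq hW.symm))

theorem eigsDesc_conjDiag (U : unitaryGroup (Fin d) ℂ) (x : Fin d → ℝ) :
    eigsDesc (conjDiag U x) = sortDesc x := by
  obtain ⟨σ, hσ⟩ := exists_sortDesc_eq_comp_perm x
  obtain ⟨V, hV⟩ := exists_conjDiag_comp_perm U x σ
  obtain ⟨W, hW⟩ := exists_conjDiag_eigsDesc (isHermitian_conjDiag U x)
  rw [← hσ] at hV
  exact le_antisymm
    (le_of_conjDiag_le (eigsDesc_antitone _) (sortDesc_antitone x) (hW.trans hV.symm).le)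
    (le_of_conjDiag_le (sortDesc_antitone x) (eigsDesc_antitone _) (hV.trans hW.symm).le)

lemma eigsDesc_conjDiag_of_antitone (U : unitaryGroup (Fin d) ℂ) {x : Fin d → ℝ}
    (hx : Antitone x) : eigsDesc (conjDiag U x) = x := by
  rw [eigsDesc_conjDiag, sortDesc_of_antitone hx]

lemma eigsDesc_neg (hS : S.IsHermitian) : eigsDesc (-S) = -eigsAsc S := by
  obtain ⟨U, hU⟩ := exists_conjDiag_eigsAsc hS
  conv_lhs => rw [← hU, ← map_neg]
  exact eigsDesc_conjDiag_of_antitone U (eigsAsc_monotone S).neg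

lemma eigsDesc_add_algebraMap (hS : S.IsHermitian) (t : ℝ) :
    eigsDesc (S + algebraMap ℝ _ t) = eigsDesc S + algebraMap ℝ _ t := by
  obtain ⟨U, hU⟩ := exists_conjDiag_eigsDesc hS
  conv_lhs => rw [← hU, ← (conjDiag U).commutes, ← map_add]
  exact eigsDesc_conjDiag_of_antitone U ((eigsDesc_antitone S).add antitone_const)

lemma sum_eigsDesc (hS : S.IsHermitian) : ∑ i, eigsDesc S i = S.trace.re := by
  obtain ⟨U, hU⟩ := exists_conjDiag_eigsDesc hS
  conv_rhs => rw [← hU, trace_conjDiag]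
  simp only [Complex.re_sum, Complex.coe_algebraMap, Complex.ofReal_re]

lemma sum_eigsAsc (hS : S.IsHermitian) : ∑ i, eigsAsc S i = S.trace.re := by
  have := sum_eigsDesc hS.neg
  simpa only [eigsDesc_neg hS, trace_neg, Complex.neg_re, Pi.neg_apply, sum_neg_distrib,
    neg_inj] using this

lemma sum_max_eigsAsc_add_eigsDesc_sub_le {P : Matrix (Fin d) (Fin d) ℂ} {t : ℝ}
    (hA : A.IsHermitian) (hB : B.IsHermitian) (hP : P.PosSemidef)
    (h : A + B ≤ P + algebraMap ℝ _ t) :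
    ∑ i, max (eigsAsc A i + eigsDesc B i - t) 0 ≤ P.trace.re := by
  have hX : (P - A).IsHermitian := hP.1.sub hA
  have hXt : (P - A + algebraMap ℝ _ t).IsHermitian :=
    hX.add (isHermitian_iff_isSelfAdjoint.mpr (.algebraMap _ (.all t)))
  have hBX : eigsDesc B ≤ eigsDesc (P - A) + algebraMap ℝ _ t := by
    rw [← eigsDesc_add_algebraMap hX]
    refine eigsDesc_mono hB hXt ?_
    rwa [sub_add_eq_add_sub, le_sub_iff_add_le']
  have hAX : -eigsAsc A ≤ eigsDesc (P - A) := by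
    rw [← eigsDesc_neg hA]
    refine eigsDesc_mono hA.neg hX ?_
    rwa [le_sub_iff_add_le, neg_add_cancel, nonneg_iff_posSemidef]
  calc ∑ i, max (eigsAsc A i + eigsDesc B i - t) 0
      ≤ ∑ i, (eigsAsc A i + eigsDesc (P - A) i) := by
        refine sum_le_sum fun i _ => max_le ?_ ?_
        · have : eigsDesc B i ≤ eigsDesc (P - A) i + t := hBX i
          linarith
        · have : -eigsAsc A i ≤ eigsDesc (P - A) i := hAX i
          linarith
    _ = P.trace.re := by
        rw [sum_add_distrib, sum_eigsAsc hA, sum_eigsDesc hX, trace_sub, Complex.sub_re]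
        ring

/- Lidskii's inequality. If `A + B` has eigenvalues `γ` then `A + B ≤ P + t`, where `P` has
eigenvalues `max (γ - t) 0`; so both sides can be compared through their excesses over `t`. -/
theorem majorizedBy_eigsAsc_add_eigsDesc (hA : A.IsHermitian) (hB : B.IsHermitian) :
    MajorizedBy (eigsAsc A + eigsDesc B) (eigsDesc (A + B)) := by
  obtain ⟨U, hU⟩ := exists_conjDiag_eigsDesc (hA.add hB)
  refine majorizedBy_of_sum_max_sub_le ?_ fun t => ?_
  · simp only [Pi.add_apply, sum_add_distrib, sum_eigsAsc hA, sum_eigsDesc hB,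
      sum_eigsDesc (hA.add hB), trace_add, Complex.add_re]
  · set excess : Fin d → ℝ := fun i => max (eigsDesc (A + B) i - t) 0
    have hexcess : 0 ≤ excess := fun i => le_max_right _ _
    have hle : A + B ≤ conjDiag U excess + algebraMap ℝ _ t := by
      rw [← (conjDiag U).commutes, ← map_add]
      refine hU.symm.trans_le (conjDiag_mono U fun i => ?_)
      exact sub_le_iff_le_add.mp (le_max_left (eigsDesc (A + B) i - t) 0)
    have hPSD := nonneg_iff_posSemidef.mp (conjDiag_nonneg U hexcess)
    refine (sum_max_eigsAsc_add_eigsDesc_sub_le hA hB hPSD hle).trans_eq ?_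
    rw [trace_conjDiag]
    simp only [Complex.re_sum, Complex.coe_algebraMap, Complex.ofReal_re, excess]

lemma eigsDesc_eq_zero_of_rank_le (hS : S.PosSemidef) {i : Fin d} (hi : S.rank ≤ i) :
    eigsDesc S i = 0 := by
  by_contra hne
  have hpos : 0 < eigsDesc S i := (eigsDesc_nonneg hS i).lt_of_ne' hne
  obtain ⟨σ, hσ⟩ := exists_sortDesc_eq_comp_perm hS.1.eigenvalues
  have hmaps : ∀ j ∈ Iic i, hS.1.eigenvalues (σ j) ≠ 0 := fun j hj => by
    have : 0 < eigsDesc S j := hpos.trans_le (eigsDesc_antitone S (mem_Iic.mp hj))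
    rw [eigsDesc, dif_pos hS.1, hσ] at this
    exact this.ne'
  have hcard : (i : ℕ) + 1 ≤ S.rank := by
    rw [hS.1.rank_eq_card_non_zero_eigs, Fintype.card_subtype, ← Fin.card_Iic]
    exact card_le_card_of_injOn σ (fun j hj => by simpa using hmaps j hj) σ.injective.injOn
  lia

lemma trace_re_le_sum_Iic_eigsDesc {j : Fin d} (hS : S.PosSemidef) (hT : T.IsHermitian)
    (hST : S ≤ T) (hrank : S.rank ≤ j + 1) : S.trace.re ≤ ∑ i ∈ Iic j, eigsDesc T i := by
  calc S.trace.re = ∑ i, eigsDesc S i := (sum_eigsDesc hS.1).symm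
    _ = ∑ i ∈ Iic j, eigsDesc S i := by
        refine (sum_subset (subset_univ _) fun i _ hi => ?_).symm
        rw [mem_Iic, not_le, Fin.lt_def] at hi
        exact eigsDesc_eq_zero_of_rank_le hS (hrank.trans hi)
    _ ≤ ∑ i ∈ Iic j, eigsDesc T i := sum_le_sum fun i _ => eigsDesc_mono hS.1 hT hST i

end Eigenvalues

section Frames

open Matrix
open scoped ComplexConjugate MatrixOrder

variable {d k : ℕ} {a : Fin k → ℝ}

lemma posSemidef_sum_vecMulVec_star {ι : Type*} (s : Finset ι) (g : ι → Fin d → ℂ) :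
    (∑ l ∈ s, vecMulVec (g l) (star (g l))).PosSemidef :=
  posSemidef_sum _ fun l _ => posSemidef_vecMulVec_self_star (g l)

lemma rank_sum_vecMulVec_star_le {ι : Type*} (s : Finset ι) (g : ι → Fin d → ℂ) :
    (∑ l ∈ s, vecMulVec (g l) (star (g l))).rank ≤ s.card := by
  let M : Matrix (Fin d) s ℂ := of fun p l => g l p
  have hM : ∑ l ∈ s, vecMulVec (g l) (star (g l)) = M * Mᴴ := by
    ext p q
    rw [Matrix.sum_apply, mul_apply, ← sum_coe_sort]
    rfl
  rw [hM, ← Fintype.card_coe s]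
  exact (rank_mul_le_left M Mᴴ).trans (rank_le_card_width M)

lemma frameOp_posSemidef (G : Fin k → Fin d → ℂ) : (frameOp G).PosSemidef :=
  posSemidef_sum_vecMulVec_star univ G

lemma normSqVec_eq_re_trace (g : Fin d → ℂ) : normSqVec g = (vecMulVec g (star g)).trace.re := by
  rw [trace_vecMulVec, dotProduct, Complex.re_sum, normSqVec]
  exact sum_congr rfl fun i _ => by simp [Complex.mul_conj]

lemma sum_normSqVec_eq_re_trace {ι : Type*} (s : Finset ι) (g : ι → Fin d → ℂ) :
    ∑ l ∈ s, normSqVec (g l) = (∑ l ∈ s, vecMulVec (g l) (star (g l))).trace.re := by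
  simp only [normSqVec_eq_re_trace, trace_sum, Complex.re_sum]

lemma sum_normSqVec_le_sum_Iic_eigsDesc (G : Fin k → Fin d → ℂ) {s : Finset (Fin k)} {j : Fin d}
    (hs : s.card ≤ j + 1) :
    ∑ l ∈ s, normSqVec (G l) ≤ ∑ i ∈ Iic j, eigsDesc (frameOp G) i := by
  rw [sum_normSqVec_eq_re_trace]
  refine trace_re_le_sum_Iic_eigsDesc (posSemidef_sum_vecMulVec_star s G)
    (frameOp_posSemidef G).1 ?_ ((rank_sum_vecMulVec_star_le s G).trans hs)
  rw [le_iff, frameOp, ← sum_sdiff (subset_univ s), add_sub_cancel_right]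
  exact posSemidef_sum_vecMulVec_star _ G

theorem eigsDesc_frameOp_mem_Gamma (hkd : k ≤ d) (ha : Antitone a) {G : Fin k → Fin d → ℂ}
    (hG : ∀ i, normSqVec (G i) = a i) : eigsDesc (frameOp G) ∈ Gamma d a := by
  have hPSD := frameOp_posSemidef G
  have ha0 : ∀ i, 0 ≤ a i := fun i => hG i ▸ sum_nonneg fun _ _ => Complex.normSq_nonneg _
  refine (mem_Gamma_iff hkd ha ha0).mpr
    ⟨eigsDesc_antitone _, eigsDesc_nonneg hPSD, fun j => ?_, ?_⟩
  · rcases lt_or_ge (j : ℕ) k with hj | hj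
    · obtain ⟨p, rfl⟩ : ∃ p, j = Fin.castLE hkd p := ⟨⟨j, hj⟩, rfl⟩
      simp only [sum_Iic_castLE_pad, ← hG]
      exact sum_normSqVec_le_sum_Iic_eigsDesc G (Fin.card_Iic p).le
    · simp only [sum_Iic_pad_of_le hkd _ hj, ← hG]
      refine sum_normSqVec_le_sum_Iic_eigsDesc G ?_
      rw [card_univ, Fintype.card_fin]
      lia
  · rw [sum_pad hkd, sum_eigsDesc hPSD.1, frameOp, ← sum_normSqVec_eq_re_trace]
    simp only [hG]

/- Rotate the pair `g, h` in its span: this keeps `g g* + h h*`, and a quarter turn exchanges the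
two norms. -/
lemma exists_vecMulVec_add_eq_and_normSqVec_eq {g h : Fin d → ℂ} {r : ℝ}
    (hr : r ∈ Set.Icc (normSqVec h) (normSqVec g)) :
    ∃ u v : Fin d → ℂ, vecMulVec u (star u) + vecMulVec v (star v) =
      vecMulVec g (star g) + vecMulVec h (star h) ∧ normSqVec u = r := by
  let u : ℝ → Fin d → ℂ := fun θ => Real.cos θ • g + Real.sin θ • h
  let v : ℝ → Fin d → ℂ := fun θ => -Real.sin θ • g + Real.cos θ • h
  have hcont : Continuous fun θ => normSqVec (u θ) :=
    continuous_finsetSum _ fun p _ => Complex.continuous_normSq.comp (by fun_prop)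
  have hu_zero : normSqVec (u 0) = normSqVec g := by simp [u]
  have hu_quarter : normSqVec (u (Real.pi / 2)) = normSqVec h := by simp [u]
  obtain ⟨θ, -, hθ⟩ := intermediate_value_Icc' Real.pi_div_two_pos.le hcont.continuousOn
    (show r ∈ Set.Icc (normSqVec (u (Real.pi / 2))) (normSqVec (u 0)) by
      rwa [hu_zero, hu_quarter])
  refine ⟨u θ, v θ, ?_, hθ⟩
  have hθ_sq : (Real.sin θ : ℂ) ^ 2 + (Real.cos θ : ℂ) ^ 2 = 1 := by
    exact_mod_cast Real.sin_sq_add_cos_sq θ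
  ext p q
  simp only [u, v, Matrix.add_apply, vecMulVec_apply, Pi.star_apply, Pi.add_apply, Pi.smul_apply,
    Complex.real_smul, Complex.star_def, map_add, map_mul, Complex.conj_ofReal, Complex.ofReal_neg,
    map_neg]
  linear_combination (g p * conj (g q) + h p * conj (h q)) * hθ_sq

lemma exists_frameOp_eq_and_normSqVec_transfer (G : Fin k → Fin d → ℂ) {j l : Fin k} {δ : ℝ}
    (hjl : j ≠ l) (hδ : 0 ≤ δ) (hle : normSqVec (G l) + δ ≤ normSqVec (G j)) :
    ∃ G' : Fin k → Fin d → ℂ, frameOp G' = frameOp G ∧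
      normSqVec ∘ G' = transfer (normSqVec ∘ G) j l δ := by
  obtain ⟨u, v, hsum, hu⟩ := exists_vecMulVec_add_eq_and_normSqVec_eq (g := G j) (h := G l)
    (r := normSqVec (G j) - δ) ⟨by linarith, by linarith⟩
  have hv : normSqVec v = normSqVec (G l) + δ := by
    have := congrArg (fun A => A.trace.re) hsum
    simp only [trace_add, Complex.add_re, ← normSqVec_eq_re_trace] at this
    linarith
  let G' := Function.update (Function.update G j u) l v
  have hj : G' j = u := by simp [G', hjl]
  have hl : G' l = v := by simp [G']
  have hoff : ∀ i, i ≠ j → i ≠ l → G' i = G i := fun i hij hil => by simp [G', hij, hil]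
  refine ⟨G', ?_, ?_⟩
  · rw [← sub_eq_zero, frameOp, frameOp, sum_sub_sum_of_eq_off_pair hjl fun i hij hil => by
      rw [hoff i hij hil], hj, hl, sub_add_sub_comm, hsum, sub_self]
  · ext i
    rcases eq_or_ne i j with rfl | hij
    · rw [transfer_apply_source hjl, Function.comp_apply, hj, hu, Function.comp_apply]
    rcases eq_or_ne i l with rfl | hil
    · rw [transfer_apply_target hjl, Function.comp_apply, hl, hv, Function.comp_apply]
    · rw [transfer_apply_of_ne hij hil, Function.comp_apply, hoff i hij hil, Function.comp_apply]

theorem exists_frameOp_eq_of_prefixMajorizedBy (ha : Antitone a) {G : Fin k → Fin d → ℂ}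
    (h : PrefixMajorizedBy a (normSqVec ∘ G)) :
    ∃ G' : Fin k → Fin d → ℂ, frameOp G' = frameOp G ∧ normSqVec ∘ G' = a := by
  refine h.transfer_induction
    (Q := fun z => ∃ G' : Fin k → Fin d → ℂ, frameOp G' = frameOp G ∧ normSqVec ∘ G' = z) ha
    ?_ ⟨G, rfl, rfl⟩
  rintro _ j l δ hjl hδ hle ⟨G', hG', rfl⟩
  obtain ⟨G'', hG'', hnorm⟩ := exists_frameOp_eq_and_normSqVec_transfer G' hjl hδ hle
  exact ⟨G'', hG''.trans hG', hnorm⟩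

lemma conjDiag_single (U : unitaryGroup (Fin d) ℂ) (i : Fin d) {t : ℝ} (ht : 0 ≤ t) :
    conjDiag U (Pi.single i t) = vecMulVec (√t • (U : Matrix (Fin d) (Fin d) ℂ).col i)
      (star (√t • (U : Matrix (Fin d) (Fin d) ℂ).col i)) := by
  ext p q
  have hsqrt : (√t : ℂ) * √t = t := by exact_mod_cast Real.mul_self_sqrt ht
  rw [conjDiag_apply, Fintype.sum_eq_single i fun j hj => by simp [hj], Pi.single_eq_same,
    vecMulVec_apply]
  simp only [Pi.star_apply, Pi.smul_apply, col_apply, Complex.real_smul, Complex.star_def,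
    map_mul, Complex.conj_ofReal, Complex.coe_algebraMap]
  linear_combination -(U p i * conj (U q i)) * hsqrt

theorem exists_frameOp_eq_conjDiag (hkd : k ≤ d) (ha : Antitone a) (ha0 : ∀ i, 0 ≤ a i)
    (U : unitaryGroup (Fin d) ℂ) {μ : Fin d → ℝ} (hμ : μ ∈ Gamma d a) :
    ∃ G : Fin k → Fin d → ℂ, (∀ i, normSqVec (G i) = a i) ∧ frameOp G = conjDiag U μ := by
  rw [Gamma_eq_image_pad hkd ha ha0] at hμ
  obtain ⟨ν, hν, rfl⟩ := hμ
  obtain ⟨-, hν0, hmaj⟩ := (mem_Gamma_self_iff ha ha0).mp hν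
  let G : Fin k → Fin d → ℂ := fun l => √(ν l) • (U : Matrix (Fin d) (Fin d) ℂ).col (l.castLE hkd)
  have hG : ∀ l, vecMulVec (G l) (star (G l)) = conjDiag U (Pi.single (l.castLE hkd) (ν l)) :=
    fun l => (conjDiag_single U _ (hν0 l)).symm
  have hnorm : normSqVec ∘ G = ν := by
    ext l
    rw [Function.comp_apply, normSqVec_eq_re_trace, hG, trace_conjDiag, ← Complex.ofReal_re (ν l)]
    simp [Pi.single_apply]
  have hframe : frameOp G = conjDiag U (pad ν d) := by
    rw [← univ_sum_single (pad ν d), map_sum, sum_eq_sum_castLE hkd fun i hi => by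
      rw [pad_apply_of_le hi, Pi.single_zero, map_zero]]
    simp only [frameOp, hG, pad_castLE]
  obtain ⟨G', hG', hG'a⟩ := exists_frameOp_eq_of_prefixMajorizedBy ha (hnorm ▸ hmaj)
  exact ⟨G', congrFun hG'a, hG'.trans hframe⟩

end Frames

section Completions

variable {d k : ℕ} {a : Fin k → ℝ} {S : Matrix (Fin d) (Fin d) ℂ} {μ : Fin d → ℝ}

theorem exists_sortDesc_eq_eigsDesc_add_frameOp (hkd : k ≤ d) (ha : Antitone a)
    (ha0 : ∀ i, 0 ≤ a i) (hS : S.IsHermitian) (hμ : μ ∈ Gamma d a) :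
    ∃ G : Fin k → Fin d → ℂ, (∀ i, normSqVec (G i) = a i) ∧
      sortDesc (eigsAsc S + μ) = eigsDesc (S + frameOp G) := by
  obtain ⟨U, hU⟩ := exists_conjDiag_eigsAsc hS
  obtain ⟨G, hGa, hG⟩ := exists_frameOp_eq_conjDiag hkd ha ha0 U hμ
  refine ⟨G, hGa, ?_⟩
  conv_rhs => rw [hG, ← hU, ← map_add, eigsDesc_conjDiag]

theorem majorizedBy_eigsDesc_add_frameOp (hkd : k ≤ d) (ha : Antitone a) (hS : S.IsHermitian)
    (hμ : ∀ γ ∈ Gamma d a, MajorizedBy (eigsAsc S + μ) (eigsAsc S + γ))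
    {G : Fin k → Fin d → ℂ} (hG : ∀ i, normSqVec (G i) = a i) :
    MajorizedBy (eigsAsc S + μ) (eigsDesc (S + frameOp G)) :=
  (hμ _ (eigsDesc_frameOp_mem_Gamma hkd ha hG)).trans
    (majorizedBy_eigsAsc_add_eigsDesc hS (frameOp_posSemidef G).1)

end Completions

theorem stmt_15_general {d k : ℕ} {S : Matrix (Fin d) (Fin d) ℂ} (hS : S.PosSemidef)
    {a : Fin k → ℝ} (ha0 : ∀ i, 0 ≤ a i) (ha : Antitone a) (hkd : k ≤ d) :
    (∀ f : ℝ → ℝ, StrictConvexOn ℝ (Set.Ici 0) f →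
      ∀ μf ∈ Gamma d a,
        (∀ γ ∈ Gamma d a, ∑ i, f (eigsAsc S i + μf i) ≤ ∑ i, f (eigsAsc S i + γ i)) →
        ∀ μ'f ∈ Gamma k a,
          (∀ γ ∈ Gamma k a,
              ∑ i : Fin k, f (eigsAsc S (Fin.castLE hkd i) + μ'f i) ≤
                ∑ i : Fin k, f (eigsAsc S (Fin.castLE hkd i) + γ i)) →
          ∀ i : Fin d, eigsAsc S i + μf i =
            if h : (i : ℕ) < k then eigsAsc S (Fin.castLE hkd ⟨(i : ℕ), h⟩) + μ'f ⟨(i : ℕ), h⟩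
            else eigsAsc S i) ∧
    ∃ ν : Fin d → ℝ,
      (∀ f : ℝ → ℝ, StrictConvexOn ℝ (Set.Ici 0) f →
        ∀ μf ∈ Gamma d a,
          (∀ γ ∈ Gamma d a, ∑ i, f (eigsAsc S i + μf i) ≤ ∑ i, f (eigsAsc S i + γ i)) →
          (fun i => eigsAsc S i + μf i) = ν) ∧
      sortDesc ν ∈ {x : Fin d → ℝ | ∃ G : Fin k → Fin d → ℂ,
          (∀ i, normSqVec (G i) = a i) ∧ x = eigsDesc (S + frameOp G)} ∧
      ∀ G : Fin k → Fin d → ℂ, (∀ i, normSqVec (G i) = a i) →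
        MajorizedBy (sortDesc ν) (eigsDesc (S + frameOp G)) := by
  have hlam := eigsAsc_nonneg hS
  constructor
  · intro f hf μ hμ hmin μ' hμ' hmin' i
    have hpad : pad μ' d ∈ Gamma d a :=
      Gamma_eq_image_pad hkd ha ha0 ▸ Set.mem_image_of_mem _ hμ'
    obtain rfl : μ = pad μ' d :=
      eq_of_isMinOn_Gamma hkd ha ha0 hf hlam hμ hpad (isMinOn_iff.mpr hmin)
        (isMinOn_pad hkd ha ha0 (isMinOn_iff.mpr hmin'))
    unfold pad
    split_ifs
    exacts [rfl, add_zero _]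
  · obtain ⟨μ₀, hμ₀, hmaj⟩ :=
      exists_mem_Gamma_forall_majorizedBy_add hkd ha ha0 (eigsAsc_monotone S)
    refine ⟨eigsAsc S + μ₀, fun f hf μ hμ hmin => ?_,
      exists_sortDesc_eq_eigsDesc_add_frameOp hkd ha ha0 hS.1 hμ₀, fun G hG =>
        majorizedBy_sortDesc_left.mpr (majorizedBy_eigsDesc_add_frameOp hkd ha hS.1 hmaj hG)⟩
    rw [eq_of_isMinOn_Gamma hkd ha ha0 hf hlam hμ₀ hμ
      (isMinOn_of_forall_majorizedBy_add hf.convexOn hlam hmaj) (isMinOn_iff.mpr hmin)]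
    rfl

theorem stmt_15 {d n₀ k : ℕ} (F₀ : Fin n₀ → Fin d → ℂ) (a : Fin k → ℝ)
    (ha_pos : ∀ i, 0 < a i) (ha_mono : Antitone a)
    (hk1 : d - (frameOp F₀).rank ≤ k) (hk2 : k < d) :
    (∀ f : ℝ → ℝ, StrictConvexOn ℝ (Set.Ici 0) f → (∀ x ∈ Set.Ici (0 : ℝ), 0 ≤ f x) →
      ∀ μf ∈ Gamma d a,
        (∀ γ ∈ Gamma d a, ∑ i, f (eigsAsc (frameOp F₀) i + μf i) ≤
            ∑ i, f (eigsAsc (frameOp F₀) i + γ i)) →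
        ∀ μ'f ∈ Gamma k a,
          (∀ γ ∈ Gamma k a,
              ∑ i : Fin k, f (eigsAsc (frameOp F₀) (Fin.castLE hk2.le i) + μ'f i) ≤
                ∑ i : Fin k, f (eigsAsc (frameOp F₀) (Fin.castLE hk2.le i) + γ i)) →
          ∀ i : Fin d, eigsAsc (frameOp F₀) i + μf i =
            if h : (i : ℕ) < k then
              eigsAsc (frameOp F₀) (Fin.castLE hk2.le ⟨(i : ℕ), h⟩) + μ'f ⟨(i : ℕ), h⟩
            else eigsAsc (frameOp F₀) i) ∧
    ∃ ν : Fin d → ℝ,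
      (∀ f : ℝ → ℝ, StrictConvexOn ℝ (Set.Ici 0) f → (∀ x ∈ Set.Ici (0 : ℝ), 0 ≤ f x) →
        ∀ μf ∈ Gamma d a,
          (∀ γ ∈ Gamma d a, ∑ i, f (eigsAsc (frameOp F₀) i + μf i) ≤
              ∑ i, f (eigsAsc (frameOp F₀) i + γ i)) →
          (fun i => eigsAsc (frameOp F₀) i + μf i) = ν) ∧
      sortDesc ν ∈ {x : Fin d → ℝ | ∃ G : Fin k → Fin d → ℂ,
          (∀ i, normSqVec (G i) = a i) ∧ x = eigsDesc (frameOp F₀ + frameOp G)} ∧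
      ∀ G : Fin k → Fin d → ℂ, (∀ i, normSqVec (G i) = a i) →
        MajorizedBy (sortDesc ν) (eigsDesc (frameOp F₀ + frameOp G)) := by
  have h := stmt_15_general (frameOp_posSemidef F₀) (fun i => (ha_pos i).le) ha_mono hk2.le
  exact ⟨fun f hf _ => h.1 f hf, h.2.imp fun ν hν => ⟨fun f hf _ => hν.1 f hf, hν.2⟩⟩
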